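/- Let u be a function on 𝕋^d and define the symbols a₂, b₂, a₁ from F and u as in the context. Then a₂(x,ξ) = conj(a₂(x,ξ)), a₁(x,ξ) = conj(a₁(x,ξ)), a₁(x,−ξ) = −a₁(x,ξ), a₂(x,−ξ) = a₂(x,ξ); moreover, for s₀ > d/2 and every p ∈ ℕ with p + s₀ ≤ s: |a₂|_{𝒩²_p} + |b₂|_{𝒩²_p} + |a₁|_{𝒩¹_p} ≤ C ‖u‖_{H^{p+s₀+1}}, where C > 0 depends on ‖u‖_{H^{p+s₀+1}} and is bounded as u → 0. -/

import Mathlib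

open MeasureTheory Complex Real Filter

noncomputable section

namespace QLNLS

/-- Points of `ℝ^d` (resp. the torus `𝕋^d = (ℝ/2πℤ)^d`, via `2π`-periodic functions). -/
abbrev Vec (d : ℕ) := Fin d → ℝ
/-- Frequency lattice `ℤ^d`. -/
abbrev Zd (d : ℕ) := Fin d → ℤ
/-- Functions on the torus. -/
abbrev Fn (d : ℕ) := Vec d → ℂ
/-- Sequences of Fourier coefficients. -/
abbrev Seq (d : ℕ) := Zd d → ℂ
/-- Symbols `a(x, ξ)`. -/
abbrev Sym (d : ℕ) := Vec d → Vec d → ℂ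

variable {d : ℕ}

/-- Euclidean norm `|ξ|`. -/
def rnorm (ξ : Vec d) : ℝ := Real.sqrt (∑ i, (ξ i) ^ 2)

/-- Euclidean norm `|n|` of a lattice point. -/
def znorm (n : Zd d) : ℝ := Real.sqrt (∑ i, ((n i : ℝ)) ^ 2)

/-- Japanese bracket `⟨n⟩ = (1+|n|²)^{1/2}`. -/
def jb (n : Zd d) : ℝ := Real.sqrt (1 + ∑ i, ((n i : ℝ)) ^ 2)

/-- Japanese bracket `⟨ξ⟩` for real frequencies. -/
def jbR (ξ : Vec d) : ℝ := Real.sqrt (1 + ∑ i, (ξ i) ^ 2)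

/-- `2π`-periodicity in every coordinate. -/
def Periodic2pi (u : Fn d) : Prop :=
  ∀ (x : Vec d) (n : Zd d), u (fun i => x i + 2 * π * (n i : ℝ)) = u x

/-- A fundamental domain of the torus. -/
def box (d : ℕ) : Set (Vec d) := Set.univ.pi fun _ : Fin d => Set.Ioc (0 : ℝ) (2 * π)

/-- Fourier coefficient `û(n) = (2π)^{-d/2} ∫ u(x) e^{-i n·x} dx`. -/
def fCoeff (u : Fn d) (n : Zd d) : ℂ :=
  (((2 * π : ℝ) ^ (-(d : ℝ) / 2) : ℝ) : ℂ) *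
    ∫ x in box d, u x * Complex.exp (-Complex.I * ((∑ i, (n i : ℝ) * x i : ℝ) : ℂ))

/-- Squared Sobolev norm of a coefficient sequence. -/
def hsNormSq (s : ℝ) (c : Seq d) : ℝ := ∑' n : Zd d, jb n ^ (2 * s) * ‖c n‖ ^ 2

/-- Sobolev norm of a coefficient sequence. -/
def hsNorm (s : ℝ) (c : Seq d) : ℝ := Real.sqrt (hsNormSq s c)

/-- Membership of a coefficient sequence in `H^s`. -/
def InHsSeq (s : ℝ) (c : Seq d) : Prop :=
  Summable fun n : Zd d => jb n ^ (2 * s) * ‖c n‖ ^ 2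

/-- `H^s` norm of a function on the torus. -/
def sobNorm (s : ℝ) (u : Fn d) : ℝ := hsNorm s (fCoeff u)

/-- `u ∈ H^s(𝕋^d;ℂ)`: `u` is `2π`-periodic, its Fourier coefficients are `H^s`-summable,
and `u` is represented by its Fourier series. -/
def InHs (s : ℝ) (u : Fn d) : Prop :=
  Periodic2pi u ∧ InHsSeq s (fCoeff u) ∧
    ∀ x : Vec d, HasSum
      (fun n : Zd d => (((2 * π : ℝ) ^ (-(d : ℝ) / 2) : ℝ) : ℂ) * fCoeff u n *
        Complex.exp (Complex.I * ((∑ i, (n i : ℝ) * x i : ℝ) : ℂ))) (u x)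

/-- Partial derivative `∂_{x_i}` of a function. -/
def pdF (i : Fin d) (u : Fn d) : Fn d := fun x => fderiv ℝ u x (Pi.single i 1)

/-- Partial derivative `∂_{x_i}` of a symbol. -/
def pdx (i : Fin d) (a : Sym d) : Sym d := fun x ξ => fderiv ℝ (fun y => a y ξ) x (Pi.single i 1)

/-- Partial derivative `∂_{ξ_i}` of a symbol. -/
def pdxi (i : Fin d) (a : Sym d) : Sym d := fun x ξ => fderiv ℝ (fun η => a x η) ξ (Pi.single i 1)

/-- Iterated mixed partial derivative of a symbol along a list of directions
(`Sum.inl j` = `∂_{x_j}`, `Sum.inr j` = `∂_{ξ_j}`). -/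
def mderiv (L : List (Fin d ⊕ Fin d)) (a : Sym d) : Sym d :=
  L.foldr (fun i b => match i with | Sum.inl j => pdx j b | Sum.inr j => pdxi j b) a

/-- Number of `ξ`-derivatives in a list of directions. -/
def nXi (L : List (Fin d ⊕ Fin d)) : ℕ := (L.filter fun i => i.isRight).length

/-- The set of values whose supremum is the symbol seminorm `|a|_{𝒩^m_s}`. -/
def symVals (m : ℝ) (s : ℕ) (a : Sym d) : Set ℝ :=
  { r | ∃ (L : List (Fin d ⊕ Fin d)) (x ξ : Vec d), L.length ≤ s ∧
        r = jbR ξ ^ (-m + (nXi L : ℝ)) * ‖mderiv L a x ξ‖ }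

/-- Symbol seminorm `|a|_{𝒩^m_s}`. -/
def symNorm (m : ℝ) (s : ℕ) (a : Sym d) : ℝ := sSup (symVals m s a)

/-- Membership in the symbol class `𝒩^m_s`. -/
def InSymClass (m : ℝ) (s : ℕ) (a : Sym d) : Prop :=
  ContDiff ℝ (s : ℕ∞) (Function.uncurry a) ∧ (∀ ξ, Periodic2pi fun x => a x ξ) ∧
    BddAbove (symVals m s a)

/-- Poisson bracket `{a,b}`. -/
def poisson (a b : Sym d) : Sym d := fun x ξ =>
  ∑ j, (pdxi j a x ξ * pdx j b x ξ - pdx j a x ξ * pdxi j b x ξ)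

/-- The second-order bracket `σ(a,b)`. -/
def sigmaB (a b : Sym d) : Sym d := fun x ξ =>
  ∑ j, ∑ k,
    (pdxi j (pdxi k a) x ξ * pdx j (pdx k b) x ξ
      - 2 * pdx j (pdxi k a) x ξ * pdxi j (pdx k b) x ξ
      + pdx j (pdx k a) x ξ * pdxi j (pdxi k b) x ξ)

/-- An admissible cut-off function `χ`. -/
structure IsCutoff (χ : ℝ → ℝ) : Prop where
  smooth : ContDiff ℝ (⊤ : ℕ∞) χ
  mem : ∀ t : ℝ, χ t ∈ Set.Icc (0 : ℝ) 1
  eq_one : ∀ t : ℝ, |t| ≤ 5 / 4 → χ t = 1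
  eq_zero : ∀ t : ℝ, 8 / 5 ≤ |t| → χ t = 0

/-- `x`-Fourier coefficient `â(η, ξ)` of a symbol. -/
def symCoeff (a : Sym d) (η : Zd d) (ξ : Vec d) : ℂ := fCoeff (fun x => a x ξ) η

/-- Midpoint `(j+k)/2` of two lattice points. -/
def mid (j k : Zd d) : Vec d := fun i => ((j i + k i : ℤ) : ℝ) / 2

/-- The paradifferential cut-off factor `χ_ε(|j-k|/⟨j+k⟩) = χ(|j-k|/(ε⟨j+k⟩))`. -/
def cutFactor (χ : ℝ → ℝ) (ε : ℝ) (j k : Zd d) : ℝ :=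
  χ (znorm (j - k) / (ε * jb (j + k)))

/-- The Weyl paradifferential operator `T_a`, acting on Fourier coefficient sequences:
`(T_a h)^(j) = (2π)^{-d/2} Σ_k χ_ε(|j-k|/⟨j+k⟩) â(j-k,(j+k)/2) ĥ(k)`. -/
def paraC (χ : ℝ → ℝ) (ε : ℝ) (a : Sym d) (c : Seq d) : Seq d := fun j =>
  (((2 * π : ℝ) ^ (-(d : ℝ) / 2) : ℝ) : ℂ) *
    ∑' k : Zd d, ((cutFactor χ ε j k : ℝ) : ℂ) * symCoeff a (j - k) (mid j k) * c k

/-- The operator `R_a` built from the difference of two cut-offs. -/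
def remC (χ : ℝ → ℝ) (ε₁ ε₂ : ℝ) (a : Sym d) (c : Seq d) : Seq d := fun j =>
  (((2 * π : ℝ) ^ (-(d : ℝ) / 2) : ℝ) : ℂ) *
    ∑' k : Zd d, ((cutFactor χ ε₁ j k - cutFactor χ ε₂ j k : ℝ) : ℂ) *
      symCoeff a (j - k) (mid j k) * c k

/-- Wirtinger derivative `∂_{y_j} = (∂_{Re y_j} - i ∂_{Im y_j})/2`. -/
def wdP {n : ℕ} (j : Fin n) (G : (Fin n → ℂ) → ℂ) : (Fin n → ℂ) → ℂ := fun y =>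
  (fderiv ℝ G y (Pi.single j 1) - Complex.I * fderiv ℝ G y (Pi.single j Complex.I)) / 2

/-- Wirtinger derivative `∂_{ȳ_j} = (∂_{Re y_j} + i ∂_{Im y_j})/2`. -/
def wdM {n : ℕ} (j : Fin n) (G : (Fin n → ℂ) → ℂ) : (Fin n → ℂ) → ℂ := fun y =>
  (fderiv ℝ G y (Pi.single j 1) + Complex.I * fderiv ℝ G y (Pi.single j Complex.I)) / 2

/-- The 1-jet `(u, ∇u)` of a function, as a point of `ℂ^{d+1}`. -/
def jet (u : Fn d) (x : Vec d) : Fin (d + 1) → ℂ :=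
  Fin.cons (u x) fun j => pdF j u x

/-- The Hamiltonian nonlinearity
`P(u) = (∂_{ū}F)(u,∇u) - Σ_j ∂_{x_j}((∂_{ū_{x_j}}F)(u,∇u))`. -/
def Pop (F : (Fin (d + 1) → ℂ) → ℂ) (u : Fn d) : Fn d := fun x =>
  wdM 0 F (jet u x) - ∑ j, pdF j (fun y => wdM (Fin.succ j) F (jet u y)) x

/-- `F ∈ C^∞(ℂ^{d+1};ℝ)` in the real sense, with a zero of order at least 3 at the origin. -/
def GoodF (d : ℕ) (F : (Fin (d + 1) → ℂ) → ℂ) : Prop :=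
  ContDiff ℝ (⊤ : ℕ∞) F ∧ (∀ y, (F y).im = 0) ∧ ∀ k : ℕ, k ≤ 2 → iteratedFDeriv ℝ k F 0 = 0

/-- Global ellipticity (Hypothesis 1.1). -/
def Elliptic (d : ℕ) (F : (Fin (d + 1) → ℂ) → ℂ) : Prop :=
  ∃ c₁ > (0 : ℝ), ∃ c₂ > (0 : ℝ), ∀ (ξ : Vec d) (y : Fin (d + 1) → ℂ),
    (c₁ * ∑ i, (ξ i) ^ 2 ≤
      (∑ j, ∑ k, ((ξ j * ξ k : ℝ) : ℂ) *
        ((if j = k then 1 else 0) + wdP (Fin.succ j) (wdM (Fin.succ k) F) y)).re) ∧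
    (ξ ≠ 0 → c₂ ≤
      (1 + (∑ j, ∑ k, ((ξ j * ξ k : ℝ) : ℂ) * wdP (Fin.succ j) (wdM (Fin.succ k) F) y).re
            / ∑ i, (ξ i) ^ 2) ^ 2
        - ‖∑ j, ∑ k, ((ξ j * ξ k : ℝ) : ℂ) * wdM (Fin.succ j) (wdM (Fin.succ k) F) y‖ ^ 2
            / (∑ i, (ξ i) ^ 2) ^ 2)

/-- The symbol `a₂(x,ξ) = Σ_{j,k} (∂_{ū_{x_k}}∂_{u_{x_j}}F)(u,∇u) ξ_j ξ_k`. -/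
def a2sym (F : (Fin (d + 1) → ℂ) → ℂ) (u : Fn d) : Sym d := fun x ξ =>
  ∑ j, ∑ k, ((ξ j * ξ k : ℝ) : ℂ) * wdP (Fin.succ j) (wdM (Fin.succ k) F) (jet u x)

/-- The symbol `b₂(x,ξ) = Σ_{j,k} (∂_{ū_{x_k}}∂_{ū_{x_j}}F)(u,∇u) ξ_j ξ_k`. -/
def b2sym (F : (Fin (d + 1) → ℂ) → ℂ) (u : Fn d) : Sym d := fun x ξ =>
  ∑ j, ∑ k, ((ξ j * ξ k : ℝ) : ℂ) * wdM (Fin.succ j) (wdM (Fin.succ k) F) (jet u x)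

/-- The symbol `a₁(x,ξ) = (i/2) Σ_j ((∂_{ū}∂_{u_{x_j}}F) - (∂_u∂_{ū_{x_j}}F))(u,∇u) ξ_j`. -/
def a1sym (F : (Fin (d + 1) → ℂ) → ℂ) (u : Fn d) : Sym d := fun x ξ =>
  Complex.I / 2 * ∑ j, ((ξ j : ℝ) : ℂ) *
    (wdM 0 (wdP (Fin.succ j) F) (jet u x) - wdP 0 (wdM (Fin.succ j) F) (jet u x))

/-- Conjugation of a coefficient sequence: the sequence of `conj u`. -/
def starSeq (c : Seq d) : Seq d := fun n => (starRingEnd ℂ) (c (-n))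

/-- Pointwise conjugate of a function. -/
def starF (u : Fn d) : Fn d := fun x => (starRingEnd ℂ) (u x)

/-- Pointwise conjugate of a symbol. -/
def starSym (a : Sym d) : Sym d := fun x ξ => (starRingEnd ℂ) (a x ξ)

/-- The symbol `(x,ξ) ↦ conj (a(x,-ξ))`. -/
def flipSym (a : Sym d) : Sym d := fun x ξ => (starRingEnd ℂ) (a x (-ξ))

/-- The matrix `E = diag(1,-1)` as a sign vector. -/
def Em : Fin 2 → ℂ := ![1, -1]

/-- `Op^BW` of a 2×2 matrix of symbols, acting on vectors of coefficient sequences. -/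
def opBWmat (χ : ℝ → ℝ) (ε : ℝ) (A : Fin 2 → Fin 2 → Sym d) (C : Fin 2 → Seq d) :
    Fin 2 → Seq d := fun σ j => ∑ τ, paraC χ ε (A σ τ) (C τ) j

/-- The symbol `|ξ|²`. -/
def sq2sym (d : ℕ) : Sym d := fun _ ξ => (((rnorm ξ) ^ 2 : ℝ) : ℂ)

/-- The matrix of symbols `A₂(x,ξ)`. -/
def A2mat (F : (Fin (d + 1) → ℂ) → ℂ) (u : Fn d) : Fin 2 → Fin 2 → Sym d :=
  ![![a2sym F u, b2sym F u], ![flipSym (b2sym F u), a2sym F u]]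

/-- The matrix of symbols `A₁(x,ξ)`. -/
def A1mat (F : (Fin (d + 1) → ℂ) → ℂ) (u : Fn d) : Fin 2 → Fin 2 → Sym d :=
  ![![a1sym F u, 0], ![0, flipSym (a1sym F u)]]

/-- The full matrix of symbols `|ξ|²𝟙 + A₂(x,ξ) + A₁(x,ξ)`. -/
def sysSym (F : (Fin (d + 1) → ℂ) → ℂ) (u : Fn d) : Fin 2 → Fin 2 → Sym d := fun σ τ =>
  fun x ξ => (if σ = τ then sq2sym d x ξ else 0) + A2mat F u σ τ x ξ + A1mat F u σ τ x ξ

/-- `H^s` norm of a vector of coefficient sequences. -/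
def hsNormVec (s : ℝ) (C : Fin 2 → Seq d) : ℝ := hsNorm s (C 0) + hsNorm s (C 1)

/-- Membership of a vector of coefficient sequences in `H^s`. -/
def InHsVec (s : ℝ) (C : Fin 2 → Seq d) : Prop := InHsSeq s (C 0) ∧ InHsSeq s (C 1)

/-- The `L²` pairing `(U,V) = ∫ (u v̄ + ū v)`, at the level of Fourier coefficients. -/
def pairL2 (C E : Fin 2 → Seq d) : ℂ :=
  ∑' n : Zd d, (C 0 n * (starRingEnd ℂ) (E 0 n) + C 1 n * (starRingEnd ℂ) (E 1 n))

/-- The scalar `L²` pairing, at the level of Fourier coefficients. -/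
def pairS (c e : Seq d) : ℂ := ∑' n : Zd d, c n * (starRingEnd ℂ) (e n)

/-- A matrix of operators is real-to-real: it preserves the subspace `𝒰 = {(u, ū)}`. -/
def PreservesReality (M : (Fin 2 → Seq d) → (Fin 2 → Seq d)) : Prop :=
  ∀ c : Seq d, M ![c, starSeq c] 1 = starSeq (M ![c, starSeq c] 0)

/-- The coefficient vector of `(v(t), conj v(t))`. -/
def Vvec (v : ℝ → Fn d) (t : ℝ) : Fin 2 → Seq d :=
  ![fCoeff (v t), starSeq (fCoeff (v t))]

/-- `V = (v, v̄)` solves `V̇ = iE Op^BW(|ξ|²𝟙 + A₂ + A₁)V` on `[0,T)`. -/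
def SolvesLin (χ : ℝ → ℝ) (ε : ℝ) (F : (Fin (d + 1) → ℂ) → ℂ) (T : ℝ)
    (u v : ℝ → Fn d) : Prop :=
  ∀ᵐ t ∂(volume.restrict (Set.Ico (0 : ℝ) T)), ∀ (σ : Fin 2) (n : Zd d),
    HasDerivAt (fun τ => Vvec v τ σ n)
      (Complex.I * Em σ * opBWmat χ ε (sysSym F (u t)) (Vvec v t) σ n) t

/-- The regularity hypothesis (4.1):
`u ∈ L^∞([0,T);H^s) ∩ Lip([0,T);H^{s-2})`, with
`sup_t ‖u(t)‖_{H^{2s₀+7}} ≤ r` and `‖∂_t u‖_{H^{2s₀+5}} ≤ r` (as a Lipschitz bound). -/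
def RegHyp (s₀ : ℕ) (s T r : ℝ) (u : ℝ → Fn d) : Prop :=
  (∀ t ∈ Set.Ico (0 : ℝ) T, InHs s (u t)) ∧
  (∃ M : ℝ, ∀ t ∈ Set.Ico (0 : ℝ) T, sobNorm s (u t) ≤ M) ∧
  (∃ L : ℝ, ∀ t₁ ∈ Set.Ico (0 : ℝ) T, ∀ t₂ ∈ Set.Ico (0 : ℝ) T,
    sobNorm (s - 2) (u t₁ - u t₂) ≤ L * |t₁ - t₂|) ∧
  (∀ t ∈ Set.Ico (0 : ℝ) T, sobNorm (2 * (s₀ : ℝ) + 7) (u t) ≤ r) ∧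
  (∀ t₁ ∈ Set.Ico (0 : ℝ) T, ∀ t₂ ∈ Set.Ico (0 : ℝ) T,
    sobNorm (2 * (s₀ : ℝ) + 5) (u t₁ - u t₂) ≤ r * |t₁ - t₂|)

/-- `v ∈ L^∞([0,T);H^s) ∩ Lip([0,T);H^{s-2})`. -/
def RegSol (s T : ℝ) (v : ℝ → Fn d) : Prop :=
  (∀ t ∈ Set.Ico (0 : ℝ) T, InHs s (v t)) ∧
  (∃ M : ℝ, ∀ t ∈ Set.Ico (0 : ℝ) T, sobNorm s (v t) ≤ M) ∧
  (∃ L : ℝ, ∀ t₁ ∈ Set.Ico (0 : ℝ) T, ∀ t₂ ∈ Set.Ico (0 : ℝ) T,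
    sobNorm (s - 2) (v t₁ - v t₂) ≤ L * |t₁ - t₂|)

/-- The high-frequency cut-off `𝒳_R(ξ) = 1 - χ(|ξ|/R)`. -/
def cutXR (χ : ℝ → ℝ) (R : ℝ) (ξ : Vec d) : ℝ := 1 - χ (rnorm ξ / R)

/-- `ã_{2,R}(x,ξ) = |ξ|^{-2} a₂(x,ξ) 𝒳_R(ξ)`. -/
def a2til (F : (Fin (d + 1) → ℂ) → ℂ) (u : Fn d) (χ : ℝ → ℝ) (R : ℝ) : Sym d := fun x ξ =>
  ((((rnorm ξ) ^ 2)⁻¹ * cutXR χ R ξ : ℝ) : ℂ) * a2sym F u x ξ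

/-- `b̃_{2,R}(x,ξ) = |ξ|^{-2} b₂(x,ξ) 𝒳_R(ξ)`. -/
def b2til (F : (Fin (d + 1) → ℂ) → ℂ) (u : Fn d) (χ : ℝ → ℝ) (R : ℝ) : Sym d := fun x ξ =>
  ((((rnorm ξ) ^ 2)⁻¹ * cutXR χ R ξ : ℝ) : ℂ) * b2sym F u x ξ

/-- `λ₂ = ((1+ã_{2,R})² - |b̃_{2,R}|²)^{1/2}`. -/
def lam2 (F : (Fin (d + 1) → ℂ) → ℂ) (u : Fn d) (χ : ℝ → ℝ) (R : ℝ) :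
    Vec d → Vec d → ℝ := fun x ξ =>
  Real.sqrt ((1 + (a2til F u χ R x ξ).re) ^ 2 - ‖b2til F u χ R x ξ‖ ^ 2)

/-- The normalizing denominator `(2λ₂(1+ã_{2,R}+λ₂))^{1/2}`. -/
def sden (F : (Fin (d + 1) → ℂ) → ℂ) (u : Fn d) (χ : ℝ → ℝ) (R : ℝ) :
    Vec d → Vec d → ℝ := fun x ξ =>
  Real.sqrt (2 * lam2 F u χ R x ξ * (1 + (a2til F u χ R x ξ).re + lam2 F u χ R x ξ))

/-- The symbol `s₁`. -/
def s1sym (F : (Fin (d + 1) → ℂ) → ℂ) (u : Fn d) (χ : ℝ → ℝ) (R : ℝ) : Sym d := fun x ξ =>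
  (((1 + (a2til F u χ R x ξ).re + lam2 F u χ R x ξ) / sden F u χ R x ξ : ℝ) : ℂ)

/-- The symbol `s₂`. -/
def s2sym (F : (Fin (d + 1) → ℂ) → ℂ) (u : Fn d) (χ : ℝ → ℝ) (R : ℝ) : Sym d := fun x ξ =>
  -b2til F u χ R x ξ / ((sden F u χ R x ξ : ℝ) : ℂ)

/-- `ã⁺_{2,R} = λ₂ - 1`. -/
def a2plus (F : (Fin (d + 1) → ℂ) → ℂ) (u : Fn d) (χ : ℝ → ℝ) (R : ℝ) : Sym d := fun x ξ =>
  ((lam2 F u χ R x ξ - 1 : ℝ) : ℂ)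

/-- The diagonalized second-order symbol `a₂^{(1)}(x,ξ) = |ξ|² ã⁺_{2,R}(x,ξ)`. -/
def a2one (F : (Fin (d + 1) → ℂ) → ℂ) (u : Fn d) (χ : ℝ → ℝ) (R : ℝ) : Sym d := fun x ξ =>
  (((rnorm ξ) ^ 2 * (lam2 F u χ R x ξ - 1) : ℝ) : ℂ)

/-- The real scalar symbol `ℒ(x,ξ) = |ξ|² + a₂^{(1)}(x,ξ)`. -/
def Lscal (F : (Fin (d + 1) → ℂ) → ℂ) (u : Fn d) (χ : ℝ → ℝ) (R : ℝ) :
    Vec d → Vec d → ℝ := fun x ξ =>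
  (rnorm ξ) ^ 2 + (rnorm ξ) ^ 2 * (lam2 F u χ R x ξ - 1)

/-- The matrix `S(x,ξ)`. -/
def Smat (F : (Fin (d + 1) → ℂ) → ℂ) (u : Fn d) (χ : ℝ → ℝ) (R : ℝ) (x ξ : Vec d) :
    Matrix (Fin 2) (Fin 2) ℂ :=
  !![s1sym F u χ R x ξ, s2sym F u χ R x ξ;
     (starRingEnd ℂ) (s2sym F u χ R x ξ), s1sym F u χ R x ξ]

/-- The matrix `S^{-1}(x,ξ)`. -/
def SmatInv (F : (Fin (d + 1) → ℂ) → ℂ) (u : Fn d) (χ : ℝ → ℝ) (R : ℝ) (x ξ : Vec d) :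
    Matrix (Fin 2) (Fin 2) ℂ :=
  !![s1sym F u χ R x ξ, -s2sym F u χ R x ξ;
     -(starRingEnd ℂ) (s2sym F u χ R x ξ), s1sym F u χ R x ξ]

/-- The matrix `Ã_{2,R}(x,ξ)`. -/
def A2tilMat (F : (Fin (d + 1) → ℂ) → ℂ) (u : Fn d) (χ : ℝ → ℝ) (R : ℝ) (x ξ : Vec d) :
    Matrix (Fin 2) (Fin 2) ℂ :=
  !![a2til F u χ R x ξ, b2til F u χ R x ξ;
     (starRingEnd ℂ) (b2til F u χ R x (-ξ)), a2til F u χ R x ξ]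

/-- The matrix `E = diag(1,-1)`. -/
def EmatM : Matrix (Fin 2) (Fin 2) ℂ := !![1, 0; 0, -1]

/-- The matrix of symbols `S^{-1}(x,ξ)`. -/
def SinvMatSym (F : (Fin (d + 1) → ℂ) → ℂ) (u : Fn d) (χ : ℝ → ℝ) (R : ℝ) :
    Fin 2 → Fin 2 → Sym d :=
  ![![s1sym F u χ R, fun x ξ => -s2sym F u χ R x ξ],
    ![fun x ξ => -(starRingEnd ℂ) (s2sym F u χ R x ξ), s1sym F u χ R]]

/-- The entry `s₁^{(1)}` of the matrix `S₁`. -/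
def s1_1 (F : (Fin (d + 1) → ℂ) → ℂ) (u : Fn d) (χ : ℝ → ℝ) (R : ℝ) : Sym d := fun x ξ =>
  1 / (2 * Complex.I) *
    (poisson (s2sym F u χ R) (starSym (s2sym F u χ R)) x ξ * s1sym F u χ R x ξ
      + 2 * poisson (s1sym F u χ R) (s2sym F u χ R) x ξ *
          (starRingEnd ℂ) (s2sym F u χ R x ξ))

/-- The entry `s₂^{(1)}` of the matrix `S₁`. -/
def s2_1 (F : (Fin (d + 1) → ℂ) → ℂ) (u : Fn d) (χ : ℝ → ℝ) (R : ℝ) : Sym d := fun x ξ =>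
  1 / (2 * Complex.I) *
    (poisson (s2sym F u χ R) (starSym (s2sym F u χ R)) x ξ * s2sym F u χ R x ξ
      + 2 * poisson (s1sym F u χ R) (s2sym F u χ R) x ξ * s1sym F u χ R x ξ)

/-- The matrix `S₁(x,ξ)`. -/
def S1mat (F : (Fin (d + 1) → ℂ) → ℂ) (u : Fn d) (χ : ℝ → ℝ) (R : ℝ) (x ξ : Vec d) :
    Matrix (Fin 2) (Fin 2) ℂ :=
  (1 / (2 * Complex.I)) •
    (!![poisson (s2sym F u χ R) (starSym (s2sym F u χ R)) x ξ,
          2 * poisson (s1sym F u χ R) (s2sym F u χ R) x ξ;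
        -2 * poisson (s1sym F u χ R) (starSym (s2sym F u χ R)) x (-ξ),
          poisson (s2sym F u χ R) (starSym (s2sym F u χ R)) x (-ξ)] *
      Smat F u χ R x ξ)

/-- The symbol `g₁`. -/
def g1sym (F : (Fin (d + 1) → ℂ) → ℂ) (u : Fn d) (χ : ℝ → ℝ) (R : ℝ) : Sym d := fun x ξ =>
  1 / (2 * Complex.I) * poisson (s1_1 F u χ R) (s1sym F u χ R) x ξ
    - 1 / (2 * Complex.I) * poisson (s2_1 F u χ R) (starSym (s2sym F u χ R)) x ξ
    + 1 / 8 * sigmaB (s2sym F u χ R) (starSym (s2sym F u χ R)) x ξ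

/-- The symbol `g₂`. -/
def g2sym (F : (Fin (d + 1) → ℂ) → ℂ) (u : Fn d) (χ : ℝ → ℝ) (R : ℝ) : Sym d := fun x ξ =>
  -(1 / (2 * Complex.I)) * poisson (s1_1 F u χ R) (s2sym F u χ R) x ξ
    + 1 / (2 * Complex.I) * poisson (s2_1 F u χ R) (s1sym F u χ R) x ξ

/-- The derivative operator `∂_{x_i}` at the level of Fourier coefficients. -/
def dOp (i : Fin d) (c : Seq d) : Seq d := fun n => Complex.I * ((n i : ℝ) : ℂ) * c n

/-- A positive constant depending monotonically on a size parameter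
(hence bounded from above as the parameter goes to zero). -/
def GoodConst (C : ℝ → ℝ) : Prop := Monotone C ∧ ∀ x : ℝ, 0 < C x


lemma jb_pos (n : Zd d) : 0 < jb n := by
  unfold jb; positivity

lemma one_le_jb (n : Zd d) : 1 ≤ jb n := by
  unfold jb
  rw [Real.one_le_sqrt]
  have : 0 ≤ ∑ i, ((n i : ℝ)) ^ 2 := by positivity
  linarith

lemma abs_le_jb (n : Zd d) (i : Fin d) : |(n i : ℝ)| ≤ jb n := by
  unfold jb
  apply Real.abs_le_sqrt
  have := Finset.single_le_sum (f := fun i => ((n i : ℝ)) ^ 2) (fun i _ => sq_nonneg _)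
    (Finset.mem_univ i)
  linarith

/-- the standard lattice embedding -/
lemma summable_jb (s₀ : ℝ) (hs₀ : (d : ℝ) / 2 < s₀) :
    Summable fun n : Zd d => jb n ^ (-(2 * s₀)) := by
  let b := Pi.basisFun ℝ (Fin d)
  let L : Submodule ℤ (Vec d) := Submodule.span ℤ (Set.range b)
  have hL : Module.finrank ℤ L = d := by
    rw [ZLattice.rank ℝ L]; simp
  have hs := ZLattice.summable_norm_rpow L (-(2 * s₀)) (by rw [hL]; linarith)
  let φ : Zd d → L := fun n => ⟨fun i => (n i : ℝ), by
    have : (fun i => (n i : ℝ)) = ∑ i, n i • b i := by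
      ext k
      simp [b, Finset.sum_apply, Pi.single_apply]
    rw [this]
    exact Submodule.sum_mem _ fun i _ => Submodule.smul_mem _ _ (Submodule.subset_span ⟨i, rfl⟩)⟩
  have hφ : Function.Injective φ := by
    intro m n h
    have h2 := congrArg Subtype.val h
    ext i
    have := congrFun h2 i
    simpa [φ] using this
  have h3 := hs.comp_injective hφ
  have hd0 : (0:ℝ) ≤ d := Nat.cast_nonneg d
  refine Summable.of_norm_bounded_eventually h3 ?_
  have : ∀ᶠ n : Zd d in cofinite, n ≠ 0 := by
    simp [Filter.eventually_cofinite]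
  filter_upwards [this] with n hn
  have hnorm : ‖φ n‖ ≤ jb n := by
    show ‖(fun i => (n i : ℝ))‖ ≤ jb n
    rw [pi_norm_le_iff_of_nonneg (jb_pos n).le]
    intro i
    exact abs_le_jb n i
  have hpos : 0 < ‖φ n‖ := by
    rw [norm_pos_iff]
    intro h
    apply hn
    apply hφ
    rw [h]
    ext i
    simp [φ]
  rw [Real.norm_of_nonneg (Real.rpow_nonneg (jb_pos n).le _)]
  exact Real.rpow_le_rpow_of_nonpos hpos hnorm (by linarith)

/-- frequency functional -/
def freq (n : Zd d) : Vec d →L[ℝ] ℝ := ∑ i, (n i : ℝ) • ContinuousLinearMap.proj (R := ℝ) i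

lemma freq_apply (n : Zd d) (x : Vec d) : freq n x = ∑ i, (n i : ℝ) * x i := by
  simp [freq]

lemma freq_norm (n : Zd d) : ‖freq n‖ ≤ d * jb n := by
  refine ContinuousLinearMap.opNorm_le_bound _ (by have := (jb_pos n).le; positivity) fun x => ?_
  rw [freq_apply]
  calc ‖∑ i, (n i : ℝ) * x i‖ ≤ ∑ i : Fin d, jb n * ‖x‖ := by
        refine norm_sum_le_of_le _ fun i _ => ?_
        rw [norm_mul]
        exact mul_le_mul (abs_le_jb n i) (norm_le_pi_norm x i) (norm_nonneg _) (jb_pos n).le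
    _ = d * jb n * ‖x‖ := by simp; ring

def eI (t : ℝ) : ℂ := Complex.exp (Complex.I * (t : ℂ))

lemma eI_contDiff : ContDiff ℝ (⊤ : ℕ∞) eI := by
  unfold eI
  exact (contDiff_const.mul Complex.ofRealCLM.contDiff).cexp

lemma eI_iter (k : ℕ) : iteratedDeriv k eI = fun t => Complex.I ^ k * eI t := by
  induction k with
  | zero => simp
  | succ k ih =>
    rw [iteratedDeriv_succ, ih]
    ext t
    have h : HasDerivAt eI (Complex.I * eI t) t := by
      have h1 : HasDerivAt (fun t : ℝ => Complex.I * (t : ℂ)) (Complex.I * 1) t :=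
        (Complex.ofRealCLM.hasDerivAt (x := t)).const_mul Complex.I
      have := h1.cexp
      unfold eI
      convert this using 1
      ring
    rw [(h.const_mul (Complex.I ^ k)).deriv]
    ring

lemma eI_norm (k : ℕ) (t : ℝ) : ‖iteratedFDeriv ℝ k eI t‖ = 1 := by
  rw [norm_iteratedFDeriv_eq_norm_iteratedDeriv, eI_iter]
  simp [eI, Complex.norm_exp]

lemma mode_contDiff (c : ℂ) (n : Zd d) :
    ContDiff ℝ (⊤ : ℕ∞) (fun x : Vec d => c * eI (freq n x)) :=
  contDiff_const.mul (eI_contDiff.comp (freq n).contDiff)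

lemma mode_bound (c : ℂ) (n : Zd d) (k : ℕ) (x : Vec d) :
    ‖iteratedFDeriv ℝ k (fun x : Vec d => c * eI (freq n x)) x‖ ≤ ‖c‖ * (d * jb n) ^ k := by
  have h1 : ContDiff ℝ (⊤ : ℕ∞) (fun x : Vec d => eI (freq n x)) := eI_contDiff.comp (freq n).contDiff
  have h2 : (fun x : Vec d => c * eI (freq n x)) = fun x => c • (fun x : Vec d => eI (freq n x)) x := rfl
  rw [h2, iteratedFDeriv_const_smul_apply' (h1.contDiffAt.of_le (by exact_mod_cast le_top)),
    norm_smul]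
  gcongr
  have h3 := (freq n).iteratedFDeriv_comp_right eI_contDiff x (i := k) (by exact_mod_cast le_top)
  have h4 : (fun x : Vec d => eI (freq n x)) = eI ∘ freq n := rfl
  rw [h4, h3]
  refine (ContinuousMultilinearMap.norm_compContinuousLinearMap_le _ _).trans ?_
  rw [eI_norm]
  simp only [one_mul, Finset.prod_const, Finset.card_univ, Fintype.card_fin]
  exact pow_le_pow_left₀ (norm_nonneg _) (freq_norm n) k

/-- Cauchy-Schwarz -/
lemma cs_bound (s₀ : ℝ) (hs₀ : (d : ℝ) / 2 < s₀) :
    ∃ A : ℝ, 0 ≤ A ∧ ∀ (q : ℝ) (c : Seq d), InHsSeq (q + s₀) c →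
      Summable (fun n => jb n ^ q * ‖c n‖) ∧ ∑' n, jb n ^ q * ‖c n‖ ≤ A * hsNorm (q + s₀) c := by
  refine ⟨(∑' n : Zd d, jb n ^ (-(2 * s₀))) ^ ((1:ℝ)/2), ?_, ?_⟩
  · exact Real.rpow_nonneg (tsum_nonneg fun n => Real.rpow_nonneg (jb_pos n).le _) _
  intro q c hc
  have e1 : ∀ n : Zd d, (jb n ^ (-s₀)) ^ (2:ℝ) = jb n ^ (-(2 * s₀)) := fun n => by
    rw [← Real.rpow_mul (jb_pos n).le]; ring_nf
  have e2 : ∀ n : Zd d, (jb n ^ (q + s₀) * ‖c n‖) ^ (2:ℝ) = jb n ^ (2 * (q + s₀)) * ‖c n‖ ^ 2 :=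
    fun n => by
    rw [Real.mul_rpow (Real.rpow_nonneg (jb_pos n).le _) (norm_nonneg _),
      ← Real.rpow_mul (jb_pos n).le, Real.rpow_two, mul_comm (q + s₀)]
  have e3 : ∀ n : Zd d, jb n ^ (-s₀) * (jb n ^ (q + s₀) * ‖c n‖) = jb n ^ q * ‖c n‖ := fun n => by
    rw [← mul_assoc, ← Real.rpow_add (jb_pos n)]; ring_nf
  have h := Real.summable_and_inner_le_Lp_mul_Lq_tsum_of_nonneg (p := 2) (q := 2)
    (Real.HolderConjugate.two_two)
    (f := fun n : Zd d => jb n ^ (-s₀)) (g := fun n => jb n ^ (q + s₀) * ‖c n‖)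
    (fun n => Real.rpow_nonneg (jb_pos n).le _)
    (fun n => mul_nonneg (Real.rpow_nonneg (jb_pos n).le _) (norm_nonneg _))
    (by simp only [e1]; exact summable_jb s₀ hs₀)
    (by simp only [e2]; exact hc)
  simp only [e1, e2, e3] at h
  refine ⟨h.1, h.2.trans (le_of_eq ?_)⟩
  rw [hsNorm, hsNormSq, Real.sqrt_eq_rpow]

lemma u_bound (s₀ : ℝ) (hs₀ : (d : ℝ) / 2 < s₀) (p : ℕ) :
    ∃ A : ℝ, 0 ≤ A ∧ ∀ u : Fn d, InHs ((p : ℝ) + s₀ + 1) u →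
      ContDiff ℝ ((p + 1 : ℕ) : ℕ∞) u ∧ ∀ k : ℕ, k ≤ p + 1 → ∀ x,
        ‖iteratedFDeriv ℝ k u x‖ ≤ A * sobNorm ((p : ℝ) + s₀ + 1) u := by
  obtain ⟨A, hA, h⟩ := cs_bound (d := d) s₀ hs₀
  set κ : ℝ := (2 * π : ℝ) ^ (-(d : ℝ) / 2) with hκ
  have hκ0 : 0 ≤ κ := Real.rpow_nonneg (by positivity) _
  refine ⟨κ * (d + 1) ^ (p + 1) * A, by positivity, ?_⟩
  rintro u ⟨-, hu2, hu3⟩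
  have heq : (p : ℝ) + s₀ + 1 = ((p + 1 : ℕ) : ℝ) + s₀ := by push_cast; ring
  rw [sobNorm, heq]
  rw [heq] at hu2
  obtain ⟨hs, hle⟩ := h _ _ hu2
  simp only [Real.rpow_natCast] at hs hle
  set c := fCoeff u
  let f : Zd d → Vec d → ℂ := fun n x => ((κ : ℂ) * c n) * eI (freq n x)
  have hfu : u = fun x => ∑' n, f n x := by
    ext x
    rw [← (hu3 x).tsum_eq]
    refine tsum_congr fun n => ?_
    simp only [f, eI, freq_apply, c, κ]
  let v : ℕ → Zd d → ℝ := fun k n => κ * (d + 1) ^ (p + 1) * (jb n ^ (p + 1) * ‖c n‖)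
  have hv : Summable (v 0) := hs.mul_left _
  have hb : ∀ (k : ℕ) (n : Zd d) (x : Vec d), (k : ℕ∞) ≤ ((p + 1 : ℕ) : ℕ∞) →
      ‖iteratedFDeriv ℝ k (f n) x‖ ≤ v k n := by
    intro k n x hk
    have hk' : k ≤ p + 1 := by exact_mod_cast hk
    refine (mode_bound _ n k x).trans ?_
    have hj := one_le_jb n
    have h1 : ((d : ℝ) * jb n) ^ k ≤ ((d + 1) * jb n) ^ (p + 1) := by
      calc ((d : ℝ) * jb n) ^ k ≤ ((d + 1) * jb n) ^ k := by gcongr; linarith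
        _ ≤ _ := pow_le_pow_right₀ (by nlinarith [(Nat.cast_nonneg d : (0:ℝ) ≤ d)]) hk'
    rw [norm_mul, Complex.norm_real, Real.norm_of_nonneg hκ0]
    calc κ * ‖c n‖ * ((d : ℝ) * jb n) ^ k ≤ κ * ‖c n‖ * ((d + 1) * jb n) ^ (p + 1) := by gcongr
      _ = v k n := by simp only [v, mul_pow]; ring
  have hf : ∀ n, ContDiff ℝ ((p + 1 : ℕ) : ℕ∞) (f n) := fun n =>
    (mode_contDiff _ n).of_le (by exact_mod_cast le_top)
  refine ⟨?_, ?_⟩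
  · rw [hfu]
    exact contDiff_tsum hf (v := v) (fun k _ => hv) hb
  · intro k hk x
    rw [hfu, iteratedFDeriv_tsum_apply hf (v := v) (fun k _ => hv) hb (by exact_mod_cast hk)]
    refine (tsum_of_norm_bounded (hv.hasSum) (fun n => hb k n x (by exact_mod_cast hk))).trans ?_
    simp only [v, tsum_mul_left]
    rw [mul_assoc (κ * _)]
    gcongr

lemma comp_bound {E V : Type*} [NormedAddCommGroup E] [NormedSpace ℝ E] [NormedAddCommGroup V]
    [NormedSpace ℝ V] [ProperSpace V] (G : V → ℂ) (hG : ContDiff ℝ (⊤ : ℕ∞) G) (hG0 : G 0 = 0)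
    (R : ℝ) (p : ℕ) :
    ∃ K : ℝ, 0 ≤ K ∧ ∀ (J : E → V), ContDiff ℝ (p : ℕ∞) J → ∀ M : ℝ, 0 ≤ M → M ≤ R →
      (∀ k ≤ p, ∀ x, ‖iteratedFDeriv ℝ k J x‖ ≤ M) →
      ∀ k ≤ p, ∀ x, ‖iteratedFDeriv ℝ k (G ∘ J) x‖ ≤ K * M := by
  have hG' : ContDiff ℝ (⊤ : ℕ∞) (fderiv ℝ G) := hG.fderiv_right (by exact_mod_cast le_top)
  have hb : ∀ i : ℕ, ∃ B : ℝ, 0 ≤ B ∧ ∀ y ∈ Metric.closedBall (0 : V) R,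
      ‖iteratedFDeriv ℝ i (fderiv ℝ G) y‖ ≤ B := by
    intro i
    obtain ⟨B, hB⟩ := (isCompact_closedBall (0 : V) R).exists_bound_of_continuousOn
      (hG'.continuous_iteratedFDeriv (m := i) (by exact_mod_cast le_top)).continuousOn
    exact ⟨max B 0, le_max_right _ _, fun y hy => (hB y hy).trans (le_max_left _ _)⟩
  choose b hb0 hb using hb
  set B := ∑ i ∈ Finset.range (p + 1), b i with hBdef
  have hB0 : 0 ≤ B := Finset.sum_nonneg fun i _ => hb0 i
  have hB : ∀ i ≤ p, ∀ y ∈ Metric.closedBall (0 : V) R,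
      ‖iteratedFDeriv ℝ i (fderiv ℝ G) y‖ ≤ B := fun i hi y hy =>
    (hb i y hy).trans (Finset.single_le_sum (fun i _ => hb0 i)
      (Finset.mem_range.2 (Nat.lt_succ_of_le hi)))
  set K0 : ℝ := (p.factorial : ℝ) * B * (|R| + 1) ^ p with hK0
  have hK00 : 0 ≤ K0 := by positivity
  have hp1 : (1:ℝ) ≤ p.factorial := by exact_mod_cast Nat.one_le_iff_ne_zero.2 (Nat.factorial_ne_zero p)
  have hR1 : (1:ℝ) ≤ |R| + 1 := by have := abs_nonneg R; linarith
  have h2p : (1:ℝ) ≤ 2 ^ p := one_le_pow₀ (by norm_num)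
  refine ⟨2 ^ p * K0, by positivity, ?_⟩
  intro J hJ M hM0 hMR hJM k hk x
  have hJball : ∀ x, J x ∈ Metric.closedBall (0 : V) R := fun x => by
    have := hJM 0 (Nat.zero_le _) x
    rw [norm_iteratedFDeriv_zero] at this
    simpa using this.trans hMR
  have hMabs : M ≤ |R| := hMR.trans (le_abs_self R)
  cases k with
  | zero =>
    rw [norm_iteratedFDeriv_zero]
    have h1 : ‖G (J x) - G 0‖ ≤ B * ‖J x - 0‖ := by
      refine (convex_closedBall (0 : V) R).norm_image_sub_le_of_norm_fderiv_le (𝕜 := ℝ)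
        (fun y _ => (hG.differentiable (by simp)).differentiableAt) (fun y hy => ?_) ?_ (hJball x)
      · have := hB 0 (Nat.zero_le _) y hy
        rwa [norm_iteratedFDeriv_zero] at this
      · simp; exact hM0.trans hMR
    have h2 := hJM 0 (Nat.zero_le _) x
    rw [norm_iteratedFDeriv_zero] at h2
    rw [hG0, sub_zero, sub_zero] at h1
    refine h1.trans ?_
    have : B ≤ 2 ^ p * K0 := by
      calc B = 1 * (1 * B * 1) := by ring
        _ ≤ 2 ^ p * K0 := by
          rw [hK0]; gcongr
          exact one_le_pow₀ hR1
    gcongr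
  | succ n =>
    have hnp : n ≤ p := by omega
    rw [← norm_iteratedFDeriv_fderiv]
    have hJd : Differentiable ℝ J := hJ.differentiable (by
      have : p ≠ 0 := by omega
      exact_mod_cast this)
    have e : fderiv ℝ (G ∘ J) = fun y =>
        (ContinuousLinearMap.compL ℝ E V ℂ) ((fderiv ℝ G ∘ J) y) (fderiv ℝ J y) := by
      ext1 y
      rw [fderiv_comp y (hG.differentiable (by simp)).differentiableAt hJd.differentiableAt]
      rfl
    have hJn : ContDiff ℝ (n : ℕ∞) J := hJ.of_le (by exact_mod_cast hnp)
    rw [e]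
    refine (ContinuousLinearMap.norm_iteratedFDeriv_le_of_bilinear_of_le_one _ (N := (n : ℕ∞))
      ((hG'.of_le (by exact_mod_cast le_top)).comp hJn)
      (hJ.fderiv_right (by exact_mod_cast hk)) x (by exact_mod_cast le_rfl)
      (ContinuousLinearMap.norm_compL_le ℝ E V ℂ)).trans ?_
    have hterm : ∀ i ∈ Finset.range (n + 1),
        (n.choose i : ℝ) * ‖iteratedFDeriv ℝ i (fderiv ℝ G ∘ J) x‖ *
          ‖iteratedFDeriv ℝ (n - i) (fderiv ℝ J) x‖ ≤ (n.choose i : ℝ) * (K0 * M) := by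
      intro i hi
      have hin : i ≤ n := by simpa [Nat.lt_succ_iff] using hi
      have h1 : ‖iteratedFDeriv ℝ i (fderiv ℝ G ∘ J) x‖ ≤ i.factorial * B * (|R| + 1) ^ i := by
        refine norm_iteratedFDeriv_comp_le (N := (n : ℕ∞)) (hG'.of_le (by exact_mod_cast le_top)) hJn
          (by exact_mod_cast hin) x (fun l hl => hB l (by omega) _ (hJball x)) ?_
        intro l hl1 hl
        refine (hJM l (by omega) x).trans ?_
        calc M ≤ |R| + 1 := by linarith
          _ = (|R| + 1) ^ 1 := by ring
          _ ≤ _ := pow_le_pow_right₀ hR1 hl1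
      have h1' : (i.factorial : ℝ) * B * (|R| + 1) ^ i ≤ K0 := by
        rw [hK0]
        gcongr
        · omega
        · omega
      have h2 : ‖iteratedFDeriv ℝ (n - i) (fderiv ℝ J) x‖ ≤ M := by
        rw [norm_iteratedFDeriv_fderiv]
        exact hJM _ (by omega) x
      rw [mul_assoc]
      gcongr
      exact h1.trans h1'
    refine (Finset.sum_le_sum hterm).trans ?_
    rw [← Finset.sum_mul]
    have : (∑ i ∈ Finset.range (n + 1), (n.choose i : ℝ)) = 2 ^ n := by
      exact_mod_cast Nat.sum_range_choose n
    rw [this, ← mul_assoc]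
    gcongr
    norm_num

/-- linear pieces of the jet -/
def jA (d : ℕ) : ℂ →L[ℝ] (Fin (d + 1) → ℂ) :=
  ContinuousLinearMap.pi (Fin.cons (ContinuousLinearMap.id ℝ ℂ) fun _ => 0)

def jB (d : ℕ) : (Vec d →L[ℝ] ℂ) →L[ℝ] (Fin (d + 1) → ℂ) :=
  ContinuousLinearMap.pi (Fin.cons 0 fun j => ContinuousLinearMap.apply ℝ ℂ (Pi.single j 1))

lemma jet_eq (u : Fn d) : jet u = (jA d ∘ u) + (jB d ∘ fderiv ℝ u) := by
  ext x i
  refine Fin.cases ?_ (fun j => ?_) i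
  · simp [jet, jA, jB]
  · simp [jet, jA, jB, pdF]

lemma jet_bound (s₀ : ℝ) (hs₀ : (d : ℝ) / 2 < s₀) (p : ℕ) :
    ∃ A : ℝ, 0 ≤ A ∧ ∀ u : Fn d, InHs ((p : ℝ) + s₀ + 1) u →
      ContDiff ℝ (p : ℕ∞) (jet u) ∧ ∀ k : ℕ, k ≤ p → ∀ x,
        ‖iteratedFDeriv ℝ k (jet u) x‖ ≤ A * sobNorm ((p : ℝ) + s₀ + 1) u := by
  obtain ⟨A, hA, h⟩ := u_bound (d := d) s₀ hs₀ p
  refine ⟨‖jA d‖ * A + ‖jB d‖ * A, by positivity, ?_⟩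
  intro u hu
  obtain ⟨h1, h2⟩ := h u hu
  have hu0 : ContDiff ℝ (p : ℕ∞) u := h1.of_le (by exact_mod_cast Nat.le_succ p)
  have hu1 : ContDiff ℝ (p : ℕ∞) (fderiv ℝ u) := h1.fderiv_right (by exact_mod_cast le_rfl)
  have ha : ContDiff ℝ (p : ℕ∞) (jA d ∘ u) := (jA d).contDiff.comp hu0
  have hb : ContDiff ℝ (p : ℕ∞) (jB d ∘ fderiv ℝ u) := (jB d).contDiff.comp hu1
  rw [jet_eq]
  refine ⟨ha.add hb, ?_⟩
  intro k hk x
  have hk' : ((k : ℕ) : WithTop ℕ∞) ≤ ((p : ℕ∞) : WithTop ℕ∞) := by exact_mod_cast hk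
  rw [iteratedFDeriv_add_apply (ha.contDiffAt.of_le hk') (hb.contDiffAt.of_le hk')]
  refine (norm_add_le _ _).trans ?_
  rw [add_mul, mul_assoc, mul_assoc]
  refine add_le_add ?_ ?_
  · refine ((jA d).norm_iteratedFDeriv_comp_left hu0.contDiffAt hk').trans ?_
    gcongr
    exact h2 k (by omega) x
  · refine ((jB d).norm_iteratedFDeriv_comp_left hu1.contDiffAt hk').trans ?_
    gcongr
    rw [norm_iteratedFDeriv_fderiv]
    exact h2 (k + 1) (by omega) x

def pdl (L : List (Fin d)) (g : Fn d) : Fn d := L.foldr pdF g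

lemma pdl_cons (i : Fin d) (L : List (Fin d)) (g : Fn d) : pdl (i :: L) g = pdF i (pdl L g) := rfl

lemma pdl_contDiff (L : List (Fin d)) (g : Fn d) (m : ℕ) (hg : ContDiff ℝ ((L.length + m : ℕ) : ℕ∞) g) :
    ContDiff ℝ (m : ℕ∞) (pdl L g) := by
  induction L generalizing m with
  | nil => simpa [pdl] using hg
  | cons i L ih =>
    rw [pdl_cons]
    have h1 : ContDiff ℝ ((m + 1 : ℕ) : ℕ∞) (pdl L g) := ih (m + 1) (by
      convert hg using 3
      simp only [List.length_cons]; ring)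
    have h2 : ContDiff ℝ (m : ℕ∞) (fderiv ℝ (pdl L g)) := h1.fderiv_right (by exact_mod_cast le_rfl)
    exact h2.clm_apply contDiff_const

lemma pdl_iter (L : List (Fin d)) (g : Fn d) (hg : ContDiff ℝ (L.length : ℕ∞) g) :
    ∃ m : Fin L.length → Vec d, (∀ i, ‖m i‖ ≤ 1) ∧
      ∀ x, pdl L g x = iteratedFDeriv ℝ L.length g x m := by
  induction L with
  | nil => exact ⟨fun i => i.elim0, fun i => i.elim0, fun x => by simp [pdl]⟩
  | cons i L ih =>
    have hg' : ContDiff ℝ ((L.length + 1 : ℕ) : ℕ∞) g := hg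
    obtain ⟨m, hm, h⟩ := ih (hg'.of_le (by exact_mod_cast Nat.le_succ _))
    refine ⟨Fin.cons (Pi.single i 1) m, ?_, ?_⟩
    · intro k
      refine Fin.cases ?_ (fun j => ?_) k
      · simp only [Fin.cons_zero]
        rw [pi_norm_le_iff_of_nonneg zero_le_one]
        intro j
        by_cases hj : j = i
        · subst hj; simp
        · simp [hj]
      · simpa using hm j
    · intro x
      rw [pdl_cons, pdF]
      have e : pdl L g = fun x => iteratedFDeriv ℝ L.length g x m := funext h
      have hd : DifferentiableAt ℝ (iteratedFDeriv ℝ L.length g) x :=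
        (hg'.differentiable_iteratedFDeriv (m := L.length) (by exact_mod_cast Nat.lt_succ_self _)) x
      rw [e, fderiv_continuousMultilinear_apply_const_apply hd]
      exact (iteratedFDeriv_succ_apply_left (𝕜 := ℝ) (f := g) (x := x) (n := L.length)
        (Fin.cons (Pi.single i 1) m)).symm

lemma pdl_norm (L : List (Fin d)) (g : Fn d) (hg : ContDiff ℝ (L.length : ℕ∞) g) (x : Vec d) :
    ‖pdl L g x‖ ≤ ‖iteratedFDeriv ℝ L.length g x‖ := by
  obtain ⟨m, hm, h⟩ := pdl_iter L g hg
  rw [h]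
  refine (ContinuousMultilinearMap.le_opNorm _ _).trans ?_
  refine mul_le_of_le_one_right (norm_nonneg _) (Finset.prod_le_one (fun i _ => norm_nonneg _) fun i _ => hm i)

def xs (L : List (Fin d ⊕ Fin d)) : List (Fin d) := L.filterMap Sum.getLeft?
def xis (L : List (Fin d ⊕ Fin d)) : List (Fin d) := L.filterMap Sum.getRight?

lemma xs_length (L : List (Fin d ⊕ Fin d)) : (xs L).length ≤ L.length := List.length_filterMap_le _ _

lemma xis_length (L : List (Fin d ⊕ Fin d)) : (xis L).length = nXi L := by
  induction L with
  | nil => rfl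
  | cons i L ih =>
    cases i with
    | inl j => exact ih
    | inr j => exact congrArg Nat.succ ih

lemma mderiv_sum {ι : Type*} [Fintype ι] (Q g : ι → Fn d) (p : ℕ)
    (hQ : ∀ i, ContDiff ℝ (⊤ : ℕ∞) (Q i)) (hg : ∀ i, ContDiff ℝ (p : ℕ∞) (g i))
    (L : List (Fin d ⊕ Fin d)) (hL : L.length ≤ p) :
    mderiv L (fun x ξ => ∑ i, Q i ξ * g i x) =
      fun x ξ => ∑ i, pdl (xis L) (Q i) ξ * pdl (xs L) (g i) x := by
  induction L with
  | nil => rfl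
  | cons k L ih =>
    have ih := ih (by simp at hL; omega)
    have hl : (xs L).length + 1 ≤ p := by
      have := xs_length L
      simp at hL; omega
    cases k with
    | inl j =>
      have : mderiv (Sum.inl j :: L) (fun x ξ => ∑ i, Q i ξ * g i x)
        = pdx j (mderiv L (fun x ξ => ∑ i, Q i ξ * g i x)) := rfl
      rw [this, ih]
      ext x ξ
      have hd : ∀ i, DifferentiableAt ℝ (pdl (xs L) (g i)) x := fun i =>
        (pdl_contDiff (xs L) (g i) 1 ((hg i).of_le (by exact_mod_cast hl))).differentiable
          (by simp) x
      have e1 : xis (Sum.inl j :: L) = xis L := rfl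
      have e2 : xs (Sum.inl j :: L) = j :: xs L := rfl
      rw [e1, e2, pdx, fderiv_fun_sum (fun i _ => (hd i).const_mul _)]
      simp only [_root_.sum_apply]
      refine Finset.sum_congr rfl fun i _ => ?_
      rw [fderiv_const_mul (hd i)]
      rfl
    | inr j =>
      have : mderiv (Sum.inr j :: L) (fun x ξ => ∑ i, Q i ξ * g i x)
        = pdxi j (mderiv L (fun x ξ => ∑ i, Q i ξ * g i x)) := rfl
      rw [this, ih]
      ext x ξ
      have hd : ∀ i, DifferentiableAt ℝ (pdl (xis L) (Q i)) ξ := fun i =>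
        (pdl_contDiff (xis L) (Q i) 1 ((hQ i).of_le (by exact_mod_cast le_top))).differentiable
          (by simp) ξ
      have e1 : xs (Sum.inr j :: L) = xs L := rfl
      have e2 : xis (Sum.inr j :: L) = j :: xis L := rfl
      rw [e1, e2, pdxi, fderiv_fun_sum (fun i _ => (hd i).mul_const _)]
      simp only [_root_.sum_apply]
      refine Finset.sum_congr rfl fun i _ => ?_
      rw [fderiv_mul_const (hd i)]
      simp [pdl_cons, pdF, mul_comm]

lemma jbR_pos (ξ : Vec d) : 0 < jbR ξ := by
  unfold jbR; positivity

lemma abs_le_jbR (ξ : Vec d) (i : Fin d) : |ξ i| ≤ jbR ξ := by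
  unfold jbR
  apply Real.abs_le_sqrt
  have := Finset.single_le_sum (f := fun i => (ξ i) ^ 2) (fun i _ => sq_nonneg _)
    (Finset.mem_univ i)
  linarith

/-- `Q` is a classical symbol of order `m` with constant `K`. -/
def QB (m K : ℝ) (Q : Fn d) : Prop :=
  ∀ (L : List (Fin d)) (ξ : Vec d), jbR ξ ^ (-m + (L.length : ℝ)) * ‖pdl L Q ξ‖ ≤ K

lemma QB_step (m K : ℝ) (Q : Fn d) (h0 : ∀ ξ, ‖Q ξ‖ ≤ K * jbR ξ ^ m)
    (h : ∀ a, QB (m - 1) K (pdF a Q)) : QB m K Q := by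
  intro L ξ
  induction L using List.reverseRecOn with
  | nil =>
    simp only [List.length_nil, Nat.cast_zero, add_zero]
    have := jbR_pos ξ
    rw [Real.rpow_neg this.le, inv_mul_le_iff₀ (Real.rpow_pos_of_pos this _), mul_comm]
    exact h0 ξ
  | append_singleton L a _ =>
    have := h a L ξ
    have e : pdl (L ++ [a]) Q = pdl L (pdF a Q) := by simp [pdl]
    rw [e]
    convert this using 3
    simp; ring

lemma pdF_const (a : Fin d) (c : ℂ) : pdF a (fun _ : Vec d => c) = fun _ => 0 := by
  ext x; simp [pdF]

lemma QB_zero (m K : ℝ) (hK : 0 ≤ K) : QB m K (fun _ : Vec d => (0:ℂ)) := by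
  have : ∀ L : List (Fin d), pdl L (fun _ : Vec d => (0:ℂ)) = fun _ => 0 := by
    intro L
    induction L with
    | nil => rfl
    | cons i L ih => rw [pdl_cons, ih, pdF_const]
  intro L ξ
  rw [this]; simpa

lemma QB_const (K : ℝ) (c : ℂ) (hc : ‖c‖ ≤ K) : QB 0 K (fun _ : Vec d => c) := by
  refine QB_step _ _ _ (by simpa using hc) fun a => ?_
  rw [pdF_const]
  exact QB_zero _ _ ((norm_nonneg _).trans hc)

/-- coordinate as a complex functional -/
def co (j : Fin d) : Vec d →L[ℝ] ℂ := Complex.ofRealCLM.comp (ContinuousLinearMap.proj j)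

lemma co_apply (j : Fin d) (ξ : Vec d) : co j ξ = (ξ j : ℂ) := rfl

lemma co_single (j a : Fin d) : ‖co j (Pi.single a 1)‖ ≤ 1 := by
  rw [co_apply]
  by_cases h : j = a
  · subst h; simp
  · simp [h]

lemma QB_lin (Λ : Vec d →L[ℝ] ℂ) (K : ℝ) (h0 : ∀ ξ, ‖Λ ξ‖ ≤ K * jbR ξ)
    (h : ∀ a, ‖Λ (Pi.single a 1)‖ ≤ K) : QB 1 K (fun ξ => Λ ξ) := by
  refine QB_step _ _ _ (by simpa using h0) fun a => ?_
  have : pdF a (fun ξ => Λ ξ) = fun _ => Λ (Pi.single a 1) := by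
    ext x; simp [pdF]
  rw [this, sub_self]
  exact QB_const _ _ (h a)

lemma co_le (j : Fin d) (ξ : Vec d) : ‖co j ξ‖ ≤ jbR ξ := by
  rw [co_apply, Complex.norm_real]; exact abs_le_jbR ξ j

lemma QB_co (j : Fin d) : QB 1 1 (fun ξ : Vec d => ((ξ j : ℝ) : ℂ)) :=
  QB_lin (co j) 1 (fun ξ => by simpa using co_le j ξ) (fun a => co_single j a)

lemma QB_coco (j k : Fin d) : QB 2 2 (fun ξ : Vec d => ((ξ j * ξ k : ℝ) : ℂ)) := by
  have e : (fun ξ : Vec d => ((ξ j * ξ k : ℝ) : ℂ)) = fun ξ => co j ξ * co k ξ := by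
    ext ξ; simp [co_apply]
  rw [e]
  refine QB_step _ _ _ (fun ξ => ?_) fun a => ?_
  · rw [norm_mul, Real.rpow_two]
    nlinarith [co_le j ξ, co_le k ξ, norm_nonneg (co j ξ), norm_nonneg (co k ξ), jbR_pos ξ,
      mul_le_mul (co_le j ξ) (co_le k ξ) (norm_nonneg _) (jbR_pos ξ).le]
  · have : pdF a (fun ξ => co j ξ * co k ξ) = fun ξ =>
        ((co k (Pi.single a 1)) • co j + (co j (Pi.single a 1)) • co k) ξ := by
      ext x
      rw [pdF, fderiv_fun_mul (co j).differentiableAt (co k).differentiableAt]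
      simp [mul_comm]
    rw [this, show (2:ℝ) - 1 = 1 by norm_num]
    refine QB_lin _ _ (fun ξ => ?_) fun b => ?_
    · show ‖co k (Pi.single a 1) * co j ξ + co j (Pi.single a 1) * co k ξ‖ ≤ _
      refine (norm_add_le _ _).trans ?_
      simp only [norm_mul]
      nlinarith [mul_le_mul (co_single k a) (co_le j ξ) (norm_nonneg _) zero_le_one,
        mul_le_mul (co_single j a) (co_le k ξ) (norm_nonneg _) zero_le_one]
    · show ‖co k (Pi.single a 1) * co j (Pi.single b 1) + co j (Pi.single a 1) * co k (Pi.single b 1)‖ ≤ _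
      refine (norm_add_le _ _).trans ?_
      simp only [norm_mul]
      nlinarith [mul_le_mul (co_single k a) (co_single j b) (norm_nonneg _) zero_le_one,
        mul_le_mul (co_single j a) (co_single k b) (norm_nonneg _) zero_le_one]

lemma sobNorm_nonneg (s : ℝ) (u : Fn d) : 0 ≤ sobNorm s u := Real.sqrt_nonneg _

lemma sym_bound {ι : Type*} [Fintype ι] (s₀ : ℝ) (hs₀ : (d : ℝ) / 2 < s₀) (p : ℕ) (m K : ℝ)
    (hK : 0 ≤ K) (Q : ι → Fn d)
    (G : ι → (Fin (d + 1) → ℂ) → ℂ) (hQ : ∀ i, ContDiff ℝ (⊤ : ℕ∞) (Q i)) (hQB : ∀ i, QB m K (Q i))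
    (hG : ∀ i, ContDiff ℝ (⊤ : ℕ∞) (G i)) (hG0 : ∀ i, G i 0 = 0) (R : ℝ) :
    ∃ C : ℝ, 0 ≤ C ∧ ∀ u : Fn d, InHs ((p : ℝ) + s₀ + 1) u → sobNorm ((p : ℝ) + s₀ + 1) u ≤ R →
      symNorm m p (fun x ξ => ∑ i, Q i ξ * G i (jet u x)) ≤ C * sobNorm ((p : ℝ) + s₀ + 1) u := by
  obtain ⟨A, hA, hjet⟩ := jet_bound (d := d) s₀ hs₀ p
  choose B hB0 hB using fun i => comp_bound (E := Vec d) (G i) (hG i) (hG0 i) (A * R) p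
  refine ⟨∑ i, K * (B i * A), Finset.sum_nonneg fun i _ => mul_nonneg hK (mul_nonneg (hB0 i) hA), ?_⟩
  intro u hu huR
  obtain ⟨hJ, hJb⟩ := hjet u hu
  set M := sobNorm ((p : ℝ) + s₀ + 1) u with hM
  have hM0 : 0 ≤ M := sobNorm_nonneg _ _
  have hg : ∀ i, ContDiff ℝ (p : ℕ∞) (fun x => G i (jet u x)) := fun i =>
    ((hG i).of_le (by exact_mod_cast le_top)).comp hJ
  refine Real.sSup_le ?_ (mul_nonneg (Finset.sum_nonneg fun i _ =>
    mul_nonneg hK (mul_nonneg (hB0 i) hA)) hM0)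
  rintro r ⟨L, x, ξ, hL, rfl⟩
  rw [mderiv_sum Q (fun i x => G i (jet u x)) p hQ hg L hL, Finset.sum_mul]
  have hj := Real.rpow_nonneg (jbR_pos ξ).le (-m + (nXi L : ℝ))
  refine (mul_le_mul_of_nonneg_left (norm_sum_le _ _) hj).trans ?_
  rw [Finset.mul_sum]
  refine Finset.sum_le_sum fun i _ => ?_
  rw [norm_mul, ← mul_assoc, mul_assoc K]
  have hx : (xs L).length ≤ p := (xs_length L).trans hL
  refine mul_le_mul ?_ ?_ (norm_nonneg _) hK
  · rw [← xis_length]; exact hQB i (xis L) ξ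
  · refine (pdl_norm _ _ ((hg i).of_le (by exact_mod_cast hx)) x).trans ?_
    have := hB i (jet u) hJ (A * M) (by positivity) (by gcongr) hJb _ hx x
    rw [mul_assoc]
    exact this

def wdT {n : ℕ} (σ : ℂ) (j : Fin n) : ((Fin n → ℂ) →L[ℝ] ℂ) →L[ℝ] ℂ :=
  (1 / 2 : ℂ) • (ContinuousLinearMap.apply ℝ ℂ (Pi.single j 1) +
    (σ * Complex.I) • ContinuousLinearMap.apply ℝ ℂ (Pi.single j Complex.I))

lemma wdT_apply {n : ℕ} (σ : ℂ) (j : Fin n) (ℓ : (Fin n → ℂ) →L[ℝ] ℂ) :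
    wdT σ j ℓ = (1 / 2 : ℂ) * (ℓ (Pi.single j 1) + σ * Complex.I * ℓ (Pi.single j Complex.I)) := by
  simp [wdT]
  ring

lemma wdM_eq {n : ℕ} (j : Fin n) (G : (Fin n → ℂ) → ℂ) : wdM j G = fun y => wdT 1 j (fderiv ℝ G y) := by
  ext y; rw [wdM, wdT_apply]; ring

lemma wdP_eq {n : ℕ} (j : Fin n) (G : (Fin n → ℂ) → ℂ) : wdP j G = fun y => wdT (-1) j (fderiv ℝ G y) := by
  ext y; rw [wdP, wdT_apply]; ring

lemma wd_contDiff {n : ℕ} (σ : ℂ) (j : Fin n) (G : (Fin n → ℂ) → ℂ) (hG : ContDiff ℝ (⊤ : ℕ∞) G) :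
    ContDiff ℝ (⊤ : ℕ∞) (fun y => wdT σ j (fderiv ℝ G y)) :=
  (wdT σ j).contDiff.comp (hG.fderiv_right (by exact_mod_cast le_top))

lemma wdM_contDiff {n : ℕ} (j : Fin n) (G : (Fin n → ℂ) → ℂ) (hG : ContDiff ℝ (⊤ : ℕ∞) G) :
    ContDiff ℝ (⊤ : ℕ∞) (wdM j G) := by
  rw [wdM_eq]; exact wd_contDiff _ _ _ hG

lemma wdP_contDiff {n : ℕ} (j : Fin n) (G : (Fin n → ℂ) → ℂ) (hG : ContDiff ℝ (⊤ : ℕ∞) G) :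
    ContDiff ℝ (⊤ : ℕ∞) (wdP j G) := by
  rw [wdP_eq]; exact wd_contDiff _ _ _ hG

lemma wd_fderiv {n : ℕ} (σ : ℂ) (j : Fin n) (G : (Fin n → ℂ) → ℂ) (hG : ContDiff ℝ (⊤ : ℕ∞) G)
    (y : Fin n → ℂ) :
    fderiv ℝ (fun y => wdT σ j (fderiv ℝ G y)) y = (wdT σ j).comp (fderiv ℝ (fderiv ℝ G) y) := by
  have h : ContDiff ℝ (⊤ : ℕ∞) (fderiv ℝ G) := hG.fderiv_right (by exact_mod_cast le_top)
  have hd : DifferentiableAt ℝ (fderiv ℝ G) y := h.differentiable (by simp) y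
  exact ((wdT σ j).hasFDerivAt.comp y hd.hasFDerivAt).fderiv

lemma wd_comm {n : ℕ} (j k : Fin n) (G : (Fin n → ℂ) → ℂ) (hG : ContDiff ℝ (⊤ : ℕ∞) G)
    (y : Fin n → ℂ) : wdM j (wdP k G) y = wdP k (wdM j G) y := by
  simp only [wdM_eq, wdP_eq]
  rw [wd_fderiv _ _ _ hG, wd_fderiv _ _ _ hG]
  have hs : IsSymmSndFDerivAt ℝ G y := by
    refine hG.contDiffAt.isSymmSndFDerivAt ?_
    rw [minSmoothness_of_isRCLikeNormedField]
    have : ((2 : ℕ∞) : WithTop ℕ∞) ≤ ((⊤ : ℕ∞) : WithTop ℕ∞) := WithTop.coe_le_coe.2 le_top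
    exact this
  simp only [wdT_apply, ContinuousLinearMap.comp_apply]
  rw [hs.eq (Pi.single j 1) (Pi.single k 1), hs.eq (Pi.single j 1) (Pi.single k Complex.I),
    hs.eq (Pi.single j Complex.I) (Pi.single k 1), hs.eq (Pi.single j Complex.I) (Pi.single k Complex.I)]
  ring

lemma conj_fderiv {n : ℕ} (G : (Fin n → ℂ) → ℂ) (y v : Fin n → ℂ) :
    (starRingEnd ℂ) (fderiv ℝ G y v) = fderiv ℝ (fun y => (starRingEnd ℂ) (G y)) y v := by
  have := Complex.conjCLE.comp_fderiv (f := G) (x := y)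
  have h2 : (Complex.conjCLE ∘ G) = fun y => (starRingEnd ℂ) (G y) := by
    ext y; simp
  rw [h2] at this
  rw [this]
  simp

lemma conj_wdM {n : ℕ} (j : Fin n) (G : (Fin n → ℂ) → ℂ) (y : Fin n → ℂ) :
    (starRingEnd ℂ) (wdM j G y) = wdP j (fun y => (starRingEnd ℂ) (G y)) y := by
  simp only [wdM, wdP, ← conj_fderiv, map_div₀, map_add, map_mul, Complex.conj_I, map_ofNat]
  ring

lemma conj_wdP {n : ℕ} (j : Fin n) (G : (Fin n → ℂ) → ℂ) (y : Fin n → ℂ) :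
    (starRingEnd ℂ) (wdP j G y) = wdM j (fun y => (starRingEnd ℂ) (G y)) y := by
  simp only [wdM, wdP, ← conj_fderiv, map_div₀, map_sub, map_mul, Complex.conj_I, map_ofNat]
  ring

lemma conj_wdPM {n : ℕ} (j k : Fin n) (F : (Fin n → ℂ) → ℂ) (hF : ∀ y, (F y).im = 0)
    (y : Fin n → ℂ) : (starRingEnd ℂ) (wdP j (wdM k F) y) = wdM j (wdP k F) y := by
  have e : (fun y => (starRingEnd ℂ) (F y)) = F := funext fun y => Complex.conj_eq_iff_im.2 (hF y)
  rw [conj_wdP]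
  have : (fun y => (starRingEnd ℂ) (wdM k F y)) = wdP k F := by
    ext y; rw [conj_wdM, e]
  rw [this]

lemma conj_wdMP {n : ℕ} (j k : Fin n) (F : (Fin n → ℂ) → ℂ) (hF : ∀ y, (F y).im = 0)
    (y : Fin n → ℂ) : (starRingEnd ℂ) (wdM j (wdP k F) y) = wdP j (wdM k F) y := by
  rw [← conj_wdPM j k F hF, Complex.conj_conj]

lemma wd_wd_zero {n : ℕ} (σ τ : ℂ) (j k : Fin n) (G : (Fin n → ℂ) → ℂ)
    (hG : ContDiff ℝ (⊤ : ℕ∞) G) (h2 : iteratedFDeriv ℝ 2 G 0 = 0) :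
    wdT σ j (fderiv ℝ (fun y => wdT τ k (fderiv ℝ G y)) 0) = 0 := by
  rw [wd_fderiv _ _ _ hG]
  have : fderiv ℝ (fderiv ℝ G) 0 = 0 := by
    ext v w
    have := iteratedFDeriv_two_apply (𝕜 := ℝ) G 0 ![v, w]
    rw [h2] at this
    simpa using this.symm
  rw [this]
  simp

lemma real_parity (F : (Fin (d + 1) → ℂ) → ℂ) (hF : GoodF d F) (u : Fn d) (x ξ : Vec d) :
    (starRingEnd ℂ) (a2sym F u x ξ) = a2sym F u x ξ ∧
        (starRingEnd ℂ) (a1sym F u x ξ) = a1sym F u x ξ ∧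
        a1sym F u x (-ξ) = -a1sym F u x ξ ∧
        a2sym F u x (-ξ) = a2sym F u x ξ := by
  obtain ⟨h1, h2, -⟩ := hF
  refine ⟨?_, ?_, ?_, ?_⟩
  · simp only [a2sym, map_sum, map_mul, Complex.conj_ofReal, conj_wdPM _ _ F h2]
    rw [Finset.sum_comm]
    refine Finset.sum_congr rfl fun j _ => Finset.sum_congr rfl fun k _ => ?_
    rw [wd_comm _ _ F h1, mul_comm (ξ k)]
  · simp only [a1sym, map_sum, map_mul, map_sub, map_div₀, Complex.conj_I, map_ofNat,
      Complex.conj_ofReal, conj_wdPM _ _ F h2, conj_wdMP _ _ F h2, Finset.mul_sum]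
    refine Finset.sum_congr rfl fun j _ => ?_
    ring
  · simp [a1sym]
  · simp [a2sym]

lemma mono_const (P : Fn d → Prop) (N S : Fn d → ℝ) (hN : ∀ u, 0 ≤ N u)
    (h : ∀ R : ℝ, ∃ C : ℝ, 0 ≤ C ∧ ∀ u, P u → N u ≤ R → S u ≤ C * N u) :
    ∃ C : ℝ → ℝ, GoodConst C ∧ ∀ u, P u → S u ≤ C (N u) * N u := by
  choose c hc0 hc using fun n : ℕ => h n
  refine ⟨fun x => 1 + ∑ i ∈ Finset.range (⌈x⌉₊ + 1), c i, ⟨?_, ?_⟩, ?_⟩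
  · intro x y hxy
    have : ⌈x⌉₊ ≤ ⌈y⌉₊ := Nat.ceil_mono hxy
    have := Finset.sum_le_sum_of_subset_of_nonneg (f := c)
      (Finset.range_mono (Nat.succ_le_succ this)) (fun i _ _ => hc0 i)
    simpa using this
  · intro x
    have : 0 ≤ ∑ i ∈ Finset.range (⌈x⌉₊ + 1), c i := Finset.sum_nonneg fun i _ => hc0 i
    simp only
    linarith
  · intro u hu
    refine (hc ⌈N u⌉₊ u hu (Nat.le_ceil _)).trans ?_
    refine mul_le_mul_of_nonneg_right ?_ (hN u)
    have := Finset.single_le_sum (f := c) (fun i _ => hc0 i)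
      (Finset.mem_range.2 (Nat.lt_succ_self ⌈N u⌉₊))
    simp only
    exact this.trans (by linarith)

lemma co_contDiff (j : Fin d) : ContDiff ℝ (⊤ : ℕ∞) (fun ξ : Vec d => ((ξ j : ℝ) : ℂ)) :=
  (co j).contDiff

lemma coco_contDiff (j k : Fin d) : ContDiff ℝ (⊤ : ℕ∞) (fun ξ : Vec d => ((ξ j * ξ k : ℝ) : ℂ)) := by
  simp only [Complex.ofReal_mul]
  exact (co_contDiff j).mul (co_contDiff k)

/-- Lemma 3.2: reality and parity of the symbols `a₂, a₁`, and
seminorm estimates `|a₂|_{𝒩²_p} + |b₂|_{𝒩²_p} + |a₁|_{𝒩¹_p} ≤ C ‖u‖_{H^{p+s₀+1}}`. -/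
theorem statement_11 (d : ℕ) (hd : 1 ≤ d) (F : (Fin (d + 1) → ℂ) → ℂ) (hF : GoodF d F)
    (s₀ : ℝ) (hs₀ : (d : ℝ) / 2 < s₀) (p : ℕ) (s : ℝ) (hp : (p : ℝ) + s₀ ≤ s) :
    (∀ (u : Fn d) (x ξ : Vec d),
        (starRingEnd ℂ) (a2sym F u x ξ) = a2sym F u x ξ ∧
        (starRingEnd ℂ) (a1sym F u x ξ) = a1sym F u x ξ ∧
        a1sym F u x (-ξ) = -a1sym F u x ξ ∧
        a2sym F u x (-ξ) = a2sym F u x ξ) ∧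
    ∃ C : ℝ → ℝ, GoodConst C ∧ ∀ u : Fn d, InHs ((p : ℝ) + s₀ + 1) u →
      symNorm 2 p (a2sym F u) + symNorm 2 p (b2sym F u) + symNorm 1 p (a1sym F u)
        ≤ C (sobNorm ((p : ℝ) + s₀ + 1) u) * sobNorm ((p : ℝ) + s₀ + 1) u := by
  refine ⟨fun u x ξ => real_parity F hF u x ξ, ?_⟩
  obtain ⟨hF1, -, hF2⟩ := hF
  have h2 := hF2 2 le_rfl
  refine mono_const (fun u => InHs ((p : ℝ) + s₀ + 1) u) (fun u => sobNorm ((p : ℝ) + s₀ + 1) u)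
    (fun u => symNorm 2 p (a2sym F u) + symNorm 2 p (b2sym F u) + symNorm 1 p (a1sym F u))
    (fun u => sobNorm_nonneg _ u) ?_
  intro R
  obtain ⟨Ca, hCa, ha⟩ := sym_bound (d := d) (ι := Fin d × Fin d) s₀ hs₀ p 2 2 (by norm_num)
    (fun i ξ => ((ξ i.1 * ξ i.2 : ℝ) : ℂ))
    (fun i => wdP (Fin.succ i.1) (wdM (Fin.succ i.2) F))
    (fun i => coco_contDiff i.1 i.2) (fun i => QB_coco i.1 i.2)
    (fun i => wdP_contDiff _ _ (wdM_contDiff _ _ hF1))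
    (fun i => by simp only [wdM_eq, wdP_eq]; exact wd_wd_zero _ _ _ _ F hF1 h2) R
  obtain ⟨Cb, hCb, hb⟩ := sym_bound (d := d) (ι := Fin d × Fin d) s₀ hs₀ p 2 2 (by norm_num)
    (fun i ξ => ((ξ i.1 * ξ i.2 : ℝ) : ℂ))
    (fun i => wdM (Fin.succ i.1) (wdM (Fin.succ i.2) F))
    (fun i => coco_contDiff i.1 i.2) (fun i => QB_coco i.1 i.2)
    (fun i => wdM_contDiff _ _ (wdM_contDiff _ _ hF1))
    (fun i => by simp only [wdM_eq]; exact wd_wd_zero _ _ _ _ F hF1 h2) R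
  obtain ⟨Cc, hCc, hc⟩ := sym_bound (d := d) (ι := Fin d) s₀ hs₀ p 1 1 (by norm_num)
    (fun j ξ => ((ξ j : ℝ) : ℂ))
    (fun j y => Complex.I / 2 * (wdM 0 (wdP (Fin.succ j) F) y - wdP 0 (wdM (Fin.succ j) F) y))
    (fun j => co_contDiff j) (fun j => QB_co j)
    (fun j => contDiff_const.mul ((wdM_contDiff _ _ (wdP_contDiff _ _ hF1)).sub
      (wdP_contDiff _ _ (wdM_contDiff _ _ hF1))))
    (fun j => by
      simp only [wdM_eq, wdP_eq]
      rw [wd_wd_zero _ _ _ _ F hF1 h2, wd_wd_zero _ _ _ _ F hF1 h2]; simp) R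
  refine ⟨Ca + Cb + Cc, by positivity, ?_⟩
  intro u hu huR
  have ea : a2sym F u = fun x ξ => ∑ i : Fin d × Fin d, ((ξ i.1 * ξ i.2 : ℝ) : ℂ) *
      wdP (Fin.succ i.1) (wdM (Fin.succ i.2) F) (jet u x) := by
    ext x ξ; rw [a2sym, Fintype.sum_prod_type]
  have eb : b2sym F u = fun x ξ => ∑ i : Fin d × Fin d, ((ξ i.1 * ξ i.2 : ℝ) : ℂ) *
      wdM (Fin.succ i.1) (wdM (Fin.succ i.2) F) (jet u x) := by
    ext x ξ; rw [b2sym, Fintype.sum_prod_type]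
  have ec : a1sym F u = fun x ξ => ∑ j : Fin d, ((ξ j : ℝ) : ℂ) *
      (Complex.I / 2 * (wdM 0 (wdP (Fin.succ j) F) (jet u x) - wdP 0 (wdM (Fin.succ j) F) (jet u x))) := by
    ext x ξ; rw [a1sym, Finset.mul_sum]
    refine Finset.sum_congr rfl fun j _ => ?_
    ring
  have ha := ha u hu huR
  have hb := hb u hu huR
  have hc := hc u hu huR
  rw [← ea] at ha
  rw [← eb] at hb
  rw [← ec] at hc
  linarith

end QLNLS
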